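/- Let k ≥ 1, let θ_max > 0 and ε₀ > 0 be real numbers, and on ℝ^k define g(θ) = ((ε₀+1)‖θ‖² − θ_max²)/(ε₀ θ_max²) and ∇g(θ) = 2(ε₀+1)θ/(ε₀ θ_max²). Define the projection operator Proj : ℝ^k × ℝ^k → ℝ^k by: Proj(θ, y) = y if g(θ) < 0, or if g(θ) ≥ 0 and ⟨∇g(θ), y⟩ ≤ 0; and Proj(θ, y) = y − (∇g(θ)/‖∇g(θ)‖) · ⟨∇g(θ)/‖∇g(θ)‖, y⟩ · g(θ) if g(θ) ≥ 0 and ⟨∇g(θ), y⟩ > 0. Then for every θ* ∈ ℝ^k with g(θ*) ≤ 0, every θ ∈ ℝ^k, and every y ∈ ℝ^k: ⟨θ − θ*, Proj(θ, y) − y⟩ ≤ 0. -/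

import Mathlib

open scoped RealInnerProductSpace

/-- The convex function `g` defining the projection boundary. -/
noncomputable def projG (k : ℕ) (θmax ε₀ : ℝ) (θ : EuclideanSpace ℝ (Fin k)) : ℝ :=
  ((ε₀ + 1) * ‖θ‖ ^ 2 - θmax ^ 2) / (ε₀ * θmax ^ 2)

/-- The gradient of `g`. -/
noncomputable def projGrad (k : ℕ) (θmax ε₀ : ℝ) (θ : EuclideanSpace ℝ (Fin k)) :
    EuclideanSpace ℝ (Fin k) :=
  (2 * (ε₀ + 1) / (ε₀ * θmax ^ 2)) • θ

/-- The projection operator: `Proj(θ, y) = y` if `g(θ) < 0`, or if `g(θ) ≥ 0` and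
`⟨∇g(θ), y⟩ ≤ 0`; otherwise `Proj(θ, y) = y − (∇g/‖∇g‖)·⟨∇g/‖∇g‖, y⟩·g(θ)`. -/
noncomputable def projOp (k : ℕ) (θmax ε₀ : ℝ) (θ y : EuclideanSpace ℝ (Fin k)) :
    EuclideanSpace ℝ (Fin k) :=
  if 0 ≤ projG k θmax ε₀ θ ∧ 0 < ⟪projGrad k θmax ε₀ θ, y⟫ then
    y - (⟪‖projGrad k θmax ε₀ θ‖⁻¹ • projGrad k θmax ε₀ θ, y⟫ * projG k θmax ε₀ θ) •
      (‖projGrad k θmax ε₀ θ‖⁻¹ • projGrad k θmax ε₀ θ)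
  else y

/-! The correction `Proj(θ, y) - y` is a nonpositive multiple of `∇g(θ)`, and it is nonzero only
where `g θ ≥ 0`. There the sublevel set `{g ≤ g θ}` is convex and contains `θ*`, so moving from `θ`
towards `θ*` cannot increase `g` to first order, that is, `⟪θ - θ*, ∇g(θ)⟫ ≥ 0`. -/

section QuasiconvexProjection

open scoped Gradient

variable {E : Type*} [NormedAddCommGroup E] [InnerProductSpace ℝ E] [CompleteSpace E]
  {s : Set E} {g : E → ℝ}

theorem inner_sub_gradient_nonneg_of_quasiconvexOn {x z v : E} (hg : QuasiconvexOn ℝ s g)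
    (hv : HasGradientWithinAt g v s x) (hx : x ∈ s) (hz : z ∈ s) (hzx : g z ≤ g x) :
    0 ≤ ⟪x - z, v⟫ := by
  have hmax : IsMaxOn g {w ∈ s | g w ≤ g x} x := fun w hw => hw.2
  have hsegment : segment ℝ x z ⊆ {w ∈ s | g w ≤ g x} :=
    (hg (g x)).segment_subset ⟨hx, le_rfl⟩ ⟨hz, hzx⟩
  have hdescent : ⟪v, z - x⟫ ≤ 0 := by
    simpa only [InnerProductSpace.toDual_apply_apply] using
      hmax.localize.hasFDerivWithinAt_nonpos
        (hv.hasFDerivWithinAt.mono (Set.sep_subset _ _))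
        (sub_mem_posTangentConeAt_of_segment_subset hsegment)
  rwa [← neg_sub, inner_neg_left, real_inner_comm, neg_nonneg]

/-- The projection operator of robust adaptive control associated with a function `g`. Where
`g x ≥ 0` and `y` points out of the sublevel set of `g` at `x`, the component of `y` along the unit
normal `∇ g x / ‖∇ g x‖` is multiplied by `1 - g x`; elsewhere `y` is unchanged. -/
noncomputable def gradientProj (g : E → ℝ) (x y : E) : E :=
  if 0 ≤ g x ∧ 0 < ⟪∇ g x, y⟫ then
    y - (⟪‖∇ g x‖⁻¹ • ∇ g x, y⟫ * g x) • (‖∇ g x‖⁻¹ • ∇ g x)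
  else y

theorem stmt_17_general {θ θstar : E} (hg : QuasiconvexOn ℝ s g) (hdiff : DifferentiableAt ℝ g θ)
    (hθ : θ ∈ s) (hθstar : θstar ∈ s) (hstar : g θstar ≤ 0) (y : E) :
    ⟪θ - θstar, gradientProj g θ y - y⟫ ≤ 0 := by
  unfold gradientProj
  split_ifs with hactive
  · obtain ⟨hgθ, hy⟩ := hactive
    have hgrad : HasGradientWithinAt g (∇ g θ) s θ :=
      hdiff.hasGradientAt.hasFDerivAt.hasFDerivWithinAt
    have hinner : 0 ≤ ⟪θ - θstar, ∇ g θ⟫ :=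
      inner_sub_gradient_nonneg_of_quasiconvexOn hg hgrad hθ hθstar (hstar.trans hgθ)
    rw [sub_sub_cancel_left, inner_neg_right, real_inner_smul_right, real_inner_smul_right,
      real_inner_smul_left, neg_nonpos]
    positivity
  · simp

end QuasiconvexProjection

section QuadraticBoundary

variable {k : ℕ} {θmax ε₀ : ℝ}

theorem convexOn_projG (hε₀ : 0 < ε₀) : ConvexOn ℝ Set.univ (projG k θmax ε₀) := by
  have hnorm : ConvexOn ℝ Set.univ fun θ : EuclideanSpace ℝ (Fin k) => ‖θ‖ ^ 2 :=
    convexOn_univ_norm.pow (fun _ _ => norm_nonneg _) 2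
  have hcoeff : 0 ≤ (ε₀ + 1) / (ε₀ * θmax ^ 2) := by positivity
  refine ((hnorm.smul hcoeff).add_const (-(θmax ^ 2 / (ε₀ * θmax ^ 2)))).congr fun θ _ => ?_
  simp only [projG, smul_eq_mul, Pi.add_apply]
  ring

theorem hasGradientAt_projG (θ : EuclideanSpace ℝ (Fin k)) :
    HasGradientAt (projG k θmax ε₀) (projGrad k θmax ε₀ θ) θ := by
  rw [hasGradientAt_iff_hasFDerivAt]
  have hderiv := (((hasStrictFDerivAt_norm_sq θ).hasFDerivAt.const_mul (ε₀ + 1)).sub_const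
    (θmax ^ 2)).mul_const (ε₀ * θmax ^ 2)⁻¹
  refine hderiv.congr_fderiv ?_
  ext w
  simp only [projGrad, map_smul, smul_apply, InnerProductSpace.toDual_apply_apply,
    coe_innerSL_apply, smul_eq_mul, nsmul_eq_mul, Nat.cast_ofNat, mul_inv_rev]
  ring

theorem projOp_eq_gradientProj (θ y : EuclideanSpace ℝ (Fin k)) :
    projOp k θmax ε₀ θ y = gradientProj (projG k θmax ε₀) θ y := by
  rw [projOp, gradientProj, (hasGradientAt_projG θ).gradient]

end QuadraticBoundary

/-- Property 2 of the projection operator (Appendix 7.4): for every `θ*` with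
`g(θ*) ≤ 0`, every `θ` and every `y`, one has `⟨θ − θ*, Proj(θ, y) − y⟩ ≤ 0`. -/
theorem stmt_17 (k : ℕ) (hk : 1 ≤ k) (θmax ε₀ : ℝ) (hθmax : 0 < θmax) (hε₀ : 0 < ε₀) :
    ∀ θstar : EuclideanSpace ℝ (Fin k), projG k θmax ε₀ θstar ≤ 0 →
      ∀ θ y : EuclideanSpace ℝ (Fin k),
        ⟪θ - θstar, projOp k θmax ε₀ θ y - y⟫ ≤ 0 := by
  intro θstar hstar θ y
  rw [projOp_eq_gradientProj]
  exact stmt_17_general (convexOn_projG hε₀).quasiconvexOn (hasGradientAt_projG θ).differentiableAt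
    (Set.mem_univ θ) (Set.mem_univ θstar) hstar y
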